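/- arXiv:2003.01647 — 2 statements merged into one kernel-verified Lean document; each statement's English description precedes it below -/
import Mathlib

section
/- Two alternating sign hypermatrices with the same corresponding ASHL can have different numbers of nonzero entries: there exist 8 × 8 × 8 ASHMs A and B with L(A) = L(B) such that A has 68 nonzero entries and B has 76 nonzero entries. -/
open Finset

/-- The nonzero entries of the sequence `f`, in order. -/
def nonzeroList {n : ℕ} (f : Fin n → ℤ) : List ℤ :=
  ((List.finRange n).map f).filter (· != 0)

/-- The nonzero entries of `f` alternate in sign, beginning and ending with `+1`. -/
def AltLine {n : ℕ} (f : Fin n → ℤ) : Prop :=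
  nonzeroList f ≠ [] ∧
  (∀ i : ℕ, ∀ h : i < (nonzeroList f).length,
      (nonzeroList f).get ⟨i, h⟩ = (-1 : ℤ) ^ i) ∧
  (nonzeroList f).getLast? = some 1

/-- Alternating sign matrix. -/
def IsASM {n : ℕ} (M : Fin n → Fin n → ℤ) : Prop :=
  (∀ i, AltLine (fun j => M i j)) ∧ (∀ j, AltLine (fun i => M i j))

/-- Alternating sign hypermatrix. -/
def IsASHM {n : ℕ} (A : Fin n → Fin n → Fin n → ℤ) : Prop :=
  (∀ j k, AltLine (fun i => A i j k)) ∧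
  (∀ i k, AltLine (fun j => A i j k)) ∧
  (∀ i j, AltLine (fun k => A i j k))

/-- The ASHL of an ASHM: `L(A)_{ij} = ∑ k·a_{ijk}` (planes indexed `1,…,n`). -/
def ashl {n : ℕ} (A : Fin n → Fin n → Fin n → ℤ) (i j : Fin n) : ℤ :=
  ∑ k : Fin n, ((k : ℕ) + 1 : ℤ) * A i j k

def tsign {n : ℕ} (a b x : Fin n) : ℤ :=
  if x = a then 1 else if x = b then -1 else 0

/-- The T-block `T_{i₁,j₁,k₁ : i₂,j₂,k₂}`. -/
def Tblock {n : ℕ} (i₁ i₂ j₁ j₂ k₁ k₂ : Fin n) (i j k : Fin n) : ℤ :=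
  tsign i₁ i₂ i * tsign j₁ j₂ j * tsign k₁ k₂ k

/-!
Both witnesses arise from one Latin square of order 8 by adding T-blocks on its central `2 × 2`
subsquare. With planes numbered from `0`, a T-block from plane `k₁` to plane `k₂` changes the ASHL
there by `± (k₁ - k₂)`, so one block spanning `4 - 0 = 4` planes has the same effect as two blocks
spanning `5 - 2 = 3` and `7 - 6 = 1`. The single block creates two entries `-1`, while the pair
creates six. Every line of an ASHM sums to `1`, hence an `n × n × n` ASHM with `m` entries `-1` has
`n ^ 2 + 2 * m` nonzero entries: here `64 + 4` and `64 + 12`.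
-/

instance {n : ℕ} (f : Fin n → ℤ) : Decidable (AltLine f) := by
  unfold AltLine; infer_instance

instance {n : ℕ} (A : Fin n → Fin n → Fin n → ℤ) : Decidable (IsASHM A) := by
  unfold IsASHM; infer_instance

theorem sum_filter_bne_zero {M : Type*} [AddMonoid M] [DecidableEq M] (l : List M) :
    (l.filter (· != 0)).sum = l.sum := by
  induction l with
  | nil => rfl
  | cons a l ih => by_cases ha : a = 0 <;> simp [ha, ih]

theorem sum_nonzeroList {n : ℕ} (f : Fin n → ℤ) : (nonzeroList f).sum = ∑ i, f i := by
  rw [nonzeroList, sum_filter_bne_zero, Fin.sum_univ_def]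

namespace AltLine

variable {n : ℕ} {f : Fin n → ℤ}

theorem odd_length (hf : AltLine f) : Odd (nonzeroList f).length := by
  have hpos : 0 < (nonzeroList f).length := List.length_pos_iff.2 hf.1
  have hlast : (-1 : ℤ) ^ ((nonzeroList f).length - 1) = 1 := by
    rw [← hf.2.1 _ (Nat.sub_one_lt_of_lt hpos), List.get_eq_getElem, ← Option.some_inj,
      ← List.getElem?_eq_getElem, ← List.getLast?_eq_getElem?]
    exact hf.2.2
  rw [← Nat.sub_add_cancel hpos]
  exact ((neg_one_pow_eq_one_iff_even (by decide)).1 hlast).add_one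

theorem sum_eq_one (hf : AltLine f) : ∑ i, f i = 1 := by
  calc ∑ i, f i
      = ∑ m : Fin (nonzeroList f).length, (nonzeroList f).get m := by
        rw [← sum_nonzeroList]
        exact (Fin.sum_univ_getElem _).symm
    _ = ∑ m ∈ range (nonzeroList f).length, (-1 : ℤ) ^ m := by
        rw [Finset.sum_range]
        exact Finset.sum_congr rfl fun m _ => hf.2.1 m m.isLt
    _ = 1 := by rw [neg_one_geom_sum, if_neg (Nat.not_even_iff_odd.2 hf.odd_length)]

theorem eq_zero_or_one_or_neg_one (hf : AltLine f) (i : Fin n) :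
    f i = 0 ∨ f i = 1 ∨ f i = -1 := by
  refine or_iff_not_imp_left.2 fun hi => ?_
  have hmem : f i ∈ nonzeroList f := by simp [nonzeroList, hi]
  obtain ⟨m, hm⟩ := List.mem_iff_get.1 hmem
  rw [← hm, hf.2.1 m m.isLt]
  exact neg_one_pow_eq_or ℤ m

end AltLine

theorem IsASHM.card_filter_ne_zero {n : ℕ} {A : Fin n → Fin n → Fin n → ℤ} (hA : IsASHM A) :
    #{p : Fin n × Fin n × Fin n | A p.1 p.2.1 p.2.2 ≠ 0} =
      n ^ 2 + 2 * #{p : Fin n × Fin n × Fin n | A p.1 p.2.1 p.2.2 = -1} := by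
  have hentry (p : Fin n × Fin n × Fin n) :
      (if A p.1 p.2.1 p.2.2 ≠ 0 then 1 else 0 : ℤ) =
        A p.1 p.2.1 p.2.2 + 2 * if A p.1 p.2.1 p.2.2 = -1 then 1 else 0 := by
    rcases (hA.2.2 p.1 p.2.1).eq_zero_or_one_or_neg_one p.2.2 with h | h | h <;> simp [h]
  have hsum : ∑ p : Fin n × Fin n × Fin n, A p.1 p.2.1 p.2.2 = n ^ 2 := by
    simp [Fintype.sum_prod_type, (hA.2.2 _ _).sum_eq_one, sq]
  zify
  simp only [Finset.natCast_card_filter, hentry, Finset.sum_add_distrib, hsum, Finset.mul_sum]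

section ASHL

variable {n : ℕ}

theorem ashl_add (A B : Fin n → Fin n → Fin n → ℤ) : ashl (A + B) = ashl A + ashl B := by
  ext i j
  simp only [ashl, Pi.add_apply, mul_add, Finset.sum_add_distrib]

theorem sum_mul_tsign {a b : Fin n} (hab : a ≠ b) (c : Fin n → ℤ) :
    ∑ x, c x * tsign a b x = c a - c b := by
  have htsign (x : Fin n) :
      tsign a b x = (if x = a then 1 else 0) - if x = b then 1 else 0 := by
    unfold tsign
    split_ifs <;> simp_all
  simp [htsign, mul_sub, Finset.sum_sub_distrib]

theorem ashl_Tblock (i₁ i₂ j₁ j₂ : Fin n) {k₁ k₂ : Fin n} (hk : k₁ ≠ k₂) (i j : Fin n) :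
    ashl (Tblock i₁ i₂ j₁ j₂ k₁ k₂) i j =
      tsign i₁ i₂ i * tsign j₁ j₂ j * ((k₁ : ℤ) - (k₂ : ℤ)) := by
  calc ashl (Tblock i₁ i₂ j₁ j₂ k₁ k₂) i j
      = tsign i₁ i₂ i * tsign j₁ j₂ j * ∑ k : Fin n, ((k : ℕ) + 1 : ℤ) * tsign k₁ k₂ k := by
        simp only [ashl, Tblock, Finset.mul_sum, mul_left_comm]
    _ = tsign i₁ i₂ i * tsign j₁ j₂ j * ((k₁ : ℤ) - (k₂ : ℤ)) := by
        rw [sum_mul_tsign hk, add_sub_add_right_eq_sub]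

end ASHL

/-- The permutation hypermatrix of a Latin square `L`: the vertical line at `(i, j)` has a single
`+1`, in plane `L i j`. -/
def latinHypermatrix {n : ℕ} (L : Fin n → Fin n → Fin n) (i j k : Fin n) : ℤ :=
  if L i j = k then 1 else 0

/-- The Latin square underlying both witnesses: the addition table of `(ℤ/2ℤ)³`, written as
bitwise exclusive or, with the symbols `3` and `6` exchanged. Its rows and columns `3` and `4` meet
in the subsquare `0 7 / 7 0`; along each of these lines the exchange puts the symbols `2` and `6`
on one side of it and `4` and `5` on the other, so that signs alternate once the T-blocks are
added. -/
def swappedXor (i j : Fin 8) : Fin 8 :=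
  Equiv.swap 3 6 (i ^^^ j)

/-- The witness with 68 nonzero entries. The vertical lines through the block are `e₄` on the
diagonal and `e₀ - e₄ + e₇` off it. -/
def smallASHM : Fin 8 → Fin 8 → Fin 8 → ℤ :=
  latinHypermatrix swappedXor + Tblock 3 4 3 4 4 0

/-- The witness with 76 nonzero entries. The vertical lines through the blocks are
`e₀ - e₂ + e₅ - e₆ + e₇` on the diagonal and `e₂ - e₅ + e₆` off it. -/
def largeASHM : Fin 8 → Fin 8 → Fin 8 → ℤ :=
  latinHypermatrix swappedXor + (Tblock 3 4 3 4 5 2 + Tblock 3 4 3 4 7 6)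

theorem isASHM_smallASHM : IsASHM smallASHM := by
  decide +kernel

theorem isASHM_largeASHM : IsASHM largeASHM := by
  decide +kernel

theorem ashl_smallASHM_eq_ashl_largeASHM : ashl smallASHM = ashl largeASHM := by
  have hdepth : ((4 : Fin 8) : ℤ) - (0 : Fin 8) =
      ((5 : Fin 8) : ℤ) - (2 : Fin 8) + (((7 : Fin 8) : ℤ) - (6 : Fin 8)) := by decide
  rw [smallASHM, largeASHM, ashl_add, ashl_add, ashl_add]
  ext i j
  simp (disch := decide) only [Pi.add_apply, ashl_Tblock, hdepth, mul_add]

theorem filter_smallASHM_eq_neg_one :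
    ({p | smallASHM p.1 p.2.1 p.2.2 = -1} : Finset (Fin 8 × Fin 8 × Fin 8)) =
      {(3, 4, 4), (4, 3, 4)} := by
  decide +kernel

theorem filter_largeASHM_eq_neg_one :
    ({p | largeASHM p.1 p.2.1 p.2.2 = -1} : Finset (Fin 8 × Fin 8 × Fin 8)) =
      {(3, 3, 2), (3, 3, 6), (4, 4, 2), (4, 4, 6), (3, 4, 5), (4, 3, 5)} := by
  decide +kernel

theorem shared_ashl_different_support_sizes :
    ∃ A B : Fin 8 → Fin 8 → Fin 8 → ℤ,
      IsASHM A ∧ IsASHM B ∧ ashl A = ashl B ∧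
      (Finset.univ.filter
        (fun p : Fin 8 × Fin 8 × Fin 8 => A p.1 p.2.1 p.2.2 ≠ 0)).card = 68 ∧
      (Finset.univ.filter
        (fun p : Fin 8 × Fin 8 × Fin 8 => B p.1 p.2.1 p.2.2 ≠ 0)).card = 76 := by
  refine ⟨smallASHM, largeASHM, isASHM_smallASHM, isASHM_largeASHM,
    ashl_smallASHM_eq_ashl_largeASHM, ?_, ?_⟩
  · rw [isASHM_smallASHM.card_filter_ne_zero, filter_smallASHM_eq_neg_one]
    rfl
  · rw [isASHM_largeASHM.card_filter_ne_zero, filter_largeASHM_eq_neg_one]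
    rfl
end

section
/- For every even n ≥ 8 there exists an n × n × n alternating sign hypermatrix A such that the value n/2 occurs exactly (n² + 4n − 20)/2 times as an entry of L(A). In particular, for all n ≥ 7 there is an n × n ASHL in which some value occurs ⌊(n² + 4n − 19)/2⌋ times, which exceeds 2n. -/
open Finset

/-!
Number the planes `-a, …, b`, so that an entry of the ASHL is `a + 1` exactly when its vertical line
has `t`-weighted sum (moment) zero. Put an alternating diamond in the centre of each plane `t`,
shrinking as `|t|` grows: the vertical lines through the diamond of plane `0` are then symmetric
about that plane, so their moments vanish. The rows that miss the diamond of a plane receive their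
sum `1` from the triangular corners, whose antidiagonals are distributed over the planes, each cell
getting a single `+1`. Adding a `+1` and a `-1` in two further planes to the inner cells of the
antidiagonals next to the diamond keeps all lines alternating and brings the moments of these cells
down to zero as well. This gains `a - 2` cells in each of the four corners for order `2a + 1`, and
`(a - 1) + (a - 2)` cells in each of two opposite corners for order `2a + 2`.
-/

section SignWalks

/-- The partial sums of `g` along the integer interval `[lo, hi)`, started at `x`, stay in `{0, 1}`
and end at `y`. For `x = 0` and `y = 1` this says that the nonzero entries of `g` alternate in sign,
beginning and ending with `+1`. -/
def IsSignWalk (lo hi x y : ℤ) (g : ℤ → ℤ) : Prop :=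
  ∃ S : ℤ → ℤ, S lo = x ∧ S hi = y ∧ (∀ k, lo ≤ k → k ≤ hi → S k = 0 ∨ S k = 1) ∧
    ∀ k, lo ≤ k → k < hi → S (k + 1) = S k + g k

/-- The alternating signs `+1, -1, +1, …` on the interval `[l, u]`, starting with `+1` at `l`, and
`0` elsewhere. -/
def altBlock (l u t : ℤ) : ℤ :=
  if l ≤ t ∧ t ≤ u then (if (t - l) % 2 = 0 then 1 else -1) else 0

/-- The line with entries `+1` at `μ` and `p` and `-1` at `q`; for `p = q` only the entry at `μ`
is left. -/
def rod (μ p q t : ℤ) : ℤ :=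
  (if t = μ then 1 else 0) + (if t = p then 1 else 0) - (if t = q then 1 else 0)

theorem exists_filter_ofFn_eq {n : ℕ} (f : Fin n → ℤ) (S : ℕ → ℤ) (hn : S n = 1)
    (h01 : ∀ k ≤ n, S k = 0 ∨ S k = 1) (hf : ∀ i : Fin n, S (i + 1) = S i + f i) :
    ∃ r, (List.ofFn f).filter (· != 0) = (List.range r).map (fun i => (1 - 2 * S 0) * (-1) ^ i) ∧
      (1 - 2 * S 0) * (-1) ^ r = -1 := by
  induction n generalizing S with
  | zero => exact ⟨0, by simp [hn]⟩
  | succ n ih =>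
    obtain ⟨r, hr, hsign⟩ := ih (fun i => f i.succ) (fun k => S (k + 1)) hn
      (fun k hk => h01 _ (by omega)) (fun i => hf i.succ)
    have h0 : S 1 = S 0 + f 0 := hf 0
    by_cases hf0 : f 0 = 0
    · rw [hf0, add_zero] at h0
      exact ⟨r, by simpa [List.ofFn_succ, hf0, h0] using hr, by simpa [h0] using hsign⟩
    · have hS1 : 1 - 2 * S 1 = -(1 - 2 * S 0) := by
        have := h01 0 (by omega)
        have := h01 1 (by omega)
        omega
      have hf0' : f 0 = 1 - 2 * S 0 := by omega
      refine ⟨r + 1, ?_, by linear_combination hsign - (-1) ^ r * hS1⟩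
      have hr' : (List.ofFn fun i => f i.succ).filter (· != 0) =
          (List.range r).map (fun i => (1 - 2 * S 0) * (-1) ^ (i + 1)) := by
        rw [hr, hS1]
        simp only [pow_succ, neg_mul, mul_neg, mul_one]
      rw [List.ofFn_succ, List.filter_cons_of_pos (by simpa using hf0), hr', hf0',
        List.range_succ_eq_map]
      simp [Function.comp_def]

theorem IsSignWalk.altLine {n : ℕ} {lo hi : ℤ} {g : ℤ → ℤ} (h : IsSignWalk lo hi 0 1 g)
    (hn : hi = lo + n) : AltLine (fun k : Fin n => g (lo + (k : ℕ))) := by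
  obtain ⟨S, h0, h1, h01, hS⟩ := h
  obtain ⟨r, hr, hsign⟩ := exists_filter_ofFn_eq (fun k : Fin n => g (lo + (k : ℕ)))
    (fun k => S (lo + k)) (by rw [← hn, h1]) (fun k hk => h01 _ (by omega) (by omega))
    (fun i => by rw [← hS _ (by omega) (by omega)]; push_cast; ring_nf)
  simp only [Nat.cast_zero, add_zero, h0, mul_zero, sub_zero, one_mul] at hr hsign
  rw [List.ofFn_eq_map] at hr
  obtain ⟨r, rfl⟩ : ∃ r', r = r' + 1 :=
    Nat.exists_eq_succ_of_ne_zero (by rintro rfl; norm_num at hsign)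
  have hlast : (-1 : ℤ) ^ r = 1 := by rw [pow_succ] at hsign; linarith
  unfold AltLine nonzeroList
  rw [hr]
  exact ⟨by simp, fun i _ => by simp, by simp [List.range_succ, hlast]⟩

theorem IsSignWalk.congr {lo hi x y : ℤ} {g g' : ℤ → ℤ} (h : IsSignWalk lo hi x y g)
    (hg : ∀ k, lo ≤ k → k < hi → g' k = g k) : IsSignWalk lo hi x y g' := by
  obtain ⟨S, h0, h1, h01, hS⟩ := h
  exact ⟨S, h0, h1, h01, fun k hk hk' => by rw [hS k hk hk', hg k hk hk']⟩

theorem IsSignWalk.trans {lo mid hi x y z : ℤ} {g : ℤ → ℤ} (h : IsSignWalk lo mid x y g)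
    (h' : IsSignWalk mid hi y z g) (hlo : lo ≤ mid) (hhi : mid ≤ hi) :
    IsSignWalk lo hi x z g := by
  obtain ⟨S, h0, h1, h01, hS⟩ := h
  obtain ⟨S', h0', h1', h01', hS'⟩ := h'
  refine ⟨fun k => if k ≤ mid then S k else S' k, by grind, by grind, by grind, fun k hk hk' => ?_⟩
  have := hS k hk
  have := hS' k
  grind

theorem IsSignWalk.reflect {lo hi x y : ℤ} {g : ℤ → ℤ} (h : IsSignWalk lo hi x y g) (c : ℤ) :
    IsSignWalk (c - hi) (c - lo) (1 - y) (1 - x) (fun k => g (c - 1 - k)) := by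
  obtain ⟨S, h0, h1, h01, hS⟩ := h
  refine ⟨fun k => 1 - S (c - k), by simp [h1], by simp [h0], fun k hk hk' => ?_,
    fun k hk hk' => ?_⟩ <;> beta_reduce
  · have := h01 (c - k) (by omega) (by omega)
    omega
  · have := hS (c - 1 - k) (by omega) (by omega)
    rw [show c - 1 - k + 1 = c - k by ring] at this
    rw [show c - (k + 1) = c - 1 - k by ring]
    omega

theorem IsSignWalk.sum_eq {n : ℕ} {lo hi x y : ℤ} {g : ℤ → ℤ} (h : IsSignWalk lo hi x y g)
    (hn : hi = lo + n) : ∑ k : Fin n, g (lo + (k : ℕ)) = y - x := by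
  obtain ⟨S, rfl, rfl, -, hS⟩ := h
  have hg : ∀ k : Fin n, g (lo + (k : ℕ)) = S (lo + (k + 1 : ℕ)) - S (lo + (k : ℕ)) := by
    intro k
    have := hS (lo + (k : ℕ)) (by omega) (by omega)
    rw [Nat.cast_succ, ← add_assoc]
    omega
  rw [Finset.sum_congr rfl fun k _ => hg k,
    Fin.sum_univ_eq_sum_range (fun k : ℕ => S (lo + (k + 1 : ℕ)) - S (lo + k)),
    Finset.sum_range_sub (fun k : ℕ => S (lo + k)), hn, Nat.cast_zero, add_zero]

theorem IsSignWalk.right_mem {lo hi x y : ℤ} {g : ℤ → ℤ} (h : IsSignWalk lo hi x y g)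
    (hlo : lo ≤ hi) : y = 0 ∨ y = 1 := by
  obtain ⟨S, -, rfl, h01, -⟩ := h
  exact h01 hi hlo le_rfl

theorem isSignWalk_const {lo hi x : ℤ} (hx : x = 0 ∨ x = 1) :
    IsSignWalk lo hi x x (fun _ => 0) :=
  ⟨fun _ => x, rfl, rfl, fun _ _ _ => hx, fun _ _ _ => (add_zero x).symm⟩

theorem isSignWalk_altBlock {lo hi l u : ℤ} (hl : lo ≤ l) (hlu : l ≤ u) (hu : u < hi)
    (hpar : (u - l) % 2 = 0) : IsSignWalk lo hi 0 1 (altBlock l u) := by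
  refine ⟨fun k => if k ≤ l then 0 else if u < k then 1 else (k - l) % 2,
    by grind, by grind, by grind, fun k _ _ => ?_⟩
  beta_reduce
  unfold altBlock
  split_ifs <;> omega

theorem isSignWalk_rod {lo hi μ p q : ℤ} (hμ : lo ≤ μ ∧ μ < hi)
    (h : p = q ∨ lo ≤ p ∧ p < q ∧ q < μ) :
    IsSignWalk lo hi 0 1 (rod μ p q) := by
  refine ⟨fun k => (if μ < k then 1 else 0) + (if p < k then 1 else 0) - (if q < k then 1 else 0),
    by grind, by grind, by grind, fun k _ _ => ?_⟩
  unfold rod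
  grind

end SignWalks

section Layers

/-- The indicator of the antidiagonal `α + β = s` of a triangular corner. -/
def layer (s α β : ℤ) : ℤ := if α + β = s then 1 else 0

/-- The indicator of the antidiagonal `α + β = s` without its two end cells. -/
def innerLayer (s α β : ℤ) : ℤ := if 0 < α ∧ 0 < β ∧ α + β = s then 1 else 0

theorem layer_comm (s α β : ℤ) : layer s α β = layer s β α := by
  simp only [layer, add_comm]

theorem innerLayer_comm (s α β : ℤ) : innerLayer s α β = innerLayer s β α := by
  simp only [innerLayer, add_comm, and_left_comm]

theorem isSignWalk_layer {k s α : ℤ} (hs : s < k) :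
    IsSignWalk 0 (k - α) 0 (if α ≤ s then 1 else 0) (layer s α) := by
  refine ⟨fun β => if α ≤ s ∧ s < α + β then 1 else 0, by grind, by grind, by grind,
    fun β _ _ => ?_⟩
  unfold layer
  grind

theorem isSignWalk_innerLayer {k s α : ℤ} (hs : s < k) :
    IsSignWalk 0 (k - α) 0 (if 0 < α ∧ α < s then 1 else 0) (innerLayer s α) := by
  refine ⟨fun β => if 0 < α ∧ α < s ∧ s < α + β then 1 else 0, by grind, by grind, by grind,
    fun β _ _ => ?_⟩
  unfold innerLayer
  grind

theorem isSignWalk_layer_zero_add_innerLayer {k s α : ℤ} (hα : 0 ≤ α) (hs : 0 < s) (hsk : s < k) :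
    IsSignWalk 0 (k - α) 0 (if α < s then 1 else 0)
      (fun β => layer 0 α β + innerLayer s α β) := by
  refine ⟨fun β => if α = 0 ∧ 0 < β ∨ 0 < α ∧ α < s ∧ s < α + β then 1 else 0, by grind, by grind,
    by grind, fun β _ _ => ?_⟩
  unfold layer innerLayer
  grind

theorem isSignWalk_layer_sub_innerLayer {k s α : ℤ} (hα : 0 ≤ α) (hs : 0 ≤ s) (hsk : s + 1 < k) :
    IsSignWalk 0 (k - α) 0 (if α = 0 then 1 else 0)
      (fun β => layer s α β - innerLayer (s + 1) α β) := by
  refine ⟨fun β => if α = 0 ∧ s < β ∨ 0 < α ∧ 0 < β ∧ α + β = s + 1 then 1 else 0, by grind,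
    by grind, by grind, fun β _ _ => ?_⟩
  unfold layer innerLayer
  grind

end Layers

section DiamondCube

/-- The `t`-weighted sum of a vertical line over the centred plane indices `-a, …, b`. -/
noncomputable def moment (a b : ℤ) (g : ℤ → ℤ) : ℤ := ∑ t ∈ Ico (-a) (b + 1), t * g t

/-- The depth of cell `(i, j)` in the central diamond of a square with sides `0, …, a + b`: cells on
the boundary of the diamond have depth `0`, those of the triangular corners negative depth. -/
noncomputable def diamondDepth (a b i j : ℤ) : ℤ :=
  min (min (i + j - a) (a + 2 * b - i - j)) (min (a - i + j) (a + i - j))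

/-- The hypermatrix with rows and columns `0, …, a + b` and planes `-a, …, b` whose plane `t`
carries alternating signs on the diamond of the cells of depth at least `|t|`. The function
`NW α β t` fills the corner at `(0, 0)`, `NE` the corner at `(0, a + b)`, with `α` and `β` counting
the distance to the two sides of the square that meet in the corner; the other two corners are the
images under half-turn. -/
noncomputable def diamondCube (a b : ℤ) (NW NE : ℤ → ℤ → ℤ → ℤ) (i j t : ℤ) : ℤ :=
  if i + j < a then NW i j t
  else if a + i < j then NE i (a + b - j) t
  else if a + 2 * b < i + j then NW (a + b - i) (a + b - j) t
  else if a + j < i then NE (a + b - i) j t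
  else altBlock (-diamondDepth a b i j) (diamondDepth a b i j) t

/-- `C` is a filling of a triangular corner with legs of length `k` by alternating vertical lines,
of which exactly the last `z α` ones of row `α`, next to the diamonds, have moment zero. -/
structure IsCornerFilling (a b k : ℤ) (z : ℤ → ℤ) (C : ℤ → ℤ → ℤ → ℤ) : Prop where
  symm : ∀ α β t, C α β t = C β α t
  isSignWalk : ∀ α β, 0 ≤ α → 0 ≤ β → α + β < k → IsSignWalk (-a) (b + 1) 0 1 (C α β)
  moment_eq_zero_iff : ∀ α β, 0 ≤ α → 0 ≤ β → α + β < k →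
    (moment a b (C α β) = 0 ↔ k - z α ≤ α + β)
  count_mem : ∀ α, 0 ≤ α → α ≤ k → 0 ≤ z α ∧ z α ≤ k - α

/-- Two corner fillings that complete the rows of the diamonds: row `i` of plane `t` meets the
diamond iff `|t| ≤ i`, and otherwise exactly one of the two corners has to supply the sum `1`. -/
structure IsCornerPair (a b : ℤ) (x y : ℤ → ℤ) (NW NE : ℤ → ℤ → ℤ → ℤ) : Prop where
  nw : IsCornerFilling a b a x NW
  ne : IsCornerFilling a b b y NE
  row : ∀ i t, 0 ≤ i → i ≤ a → -a ≤ t → t ≤ b → ∃ u v,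
    IsSignWalk 0 (a - i) 0 u (fun j => NW i j t) ∧
    IsSignWalk 0 (b - i) 0 v (fun j => NE i j t) ∧ u + v = if i < |t| then 1 else 0

theorem moment_rod {a b μ p q : ℤ} (hμ : -a ≤ μ ∧ μ ≤ b) (h : p = q ∨ -a ≤ p ∧ p < q ∧ q < μ) :
    moment a b (rod μ p q) = μ + p - q := by
  have hμ' : μ ∈ Ico (-a) (b + 1) := by rw [mem_Ico]; omega
  rcases h with rfl | hpq
  · simp [moment, rod, hμ']
  · have hp : p ∈ Ico (-a) (b + 1) := by rw [mem_Ico]; omega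
    have hq : q ∈ Ico (-a) (b + 1) := by rw [mem_Ico]; omega
    simp [moment, rod, mul_add, mul_sub, sum_add_distrib, hμ', hp, hq, -mem_Ico]

theorem moment_altBlock_neg_self {a b d : ℤ} (ha : d ≤ a) (hb : d ≤ b) :
    moment a b (altBlock (-d) d) = 0 := by
  have hsub : Icc (-d) d ⊆ Ico (-a) (b + 1) := fun t ht => by
    rw [mem_Icc] at ht
    rw [mem_Ico]
    omega
  rw [moment, ← sum_subset hsub]
  · refine sum_involution (fun t _ => -t) ?_ ?_ ?_ ?_
    · intro t ht
      have : altBlock (-d) d (-t) = altBlock (-d) d t := by unfold altBlock; grind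
      rw [this]
      ring
    · intro t _ ht ht'
      rw [show t = 0 by omega, zero_mul] at ht
      exact ht rfl
    · intro t ht
      rw [mem_Icc] at ht ⊢
      omega
    · intro t _
      exact neg_neg t
  · intro t _ ht
    rw [altBlock, if_neg (by rwa [mem_Icc] at ht), mul_zero]

section

variable {a b : ℤ} {x y : ℤ → ℤ} {NW NE : ℤ → ℤ → ℤ → ℤ}

theorem diamondCube_half_turn (ha : 0 ≤ a) (hb : 0 ≤ b) {i j : ℤ} (hj : 0 ≤ j)
    (hj' : j ≤ a + b) (t : ℤ) :
    diamondCube a b NW NE (a + b - i) (a + b - j) t = diamondCube a b NW NE i j t := by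
  have hdepth : diamondDepth a b (a + b - i) (a + b - j) = diamondDepth a b i j := by
    unfold diamondDepth
    omega
  simp only [diamondCube, hdepth, sub_sub_cancel]
  split_ifs <;> first | rfl | omega

theorem diamondCube_transpose (ha : 0 ≤ a)
    (hNW : ∀ α β t, NW α β t = NW β α t)
    (hNE : ∀ α β t, NE α β t = NE β α t) {i j : ℤ} (hi' : i ≤ a + b) (hj' : j ≤ a + b)
    (t : ℤ) :
    diamondCube a b NW NE j i t = diamondCube a b NW NE i j t := by
  have hdepth : diamondDepth a b j i = diamondDepth a b i j := by
    unfold diamondDepth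
    omega
  simp only [diamondCube, hdepth]
  split_ifs <;> first | omega | rfl | exact hNW _ _ _ | exact hNE _ _ _

theorem isSignWalk_altBlock_diamondDepth {i j : ℤ} (hj : a ≤ i + j) (hj' : i + j ≤ a + 2 * b)
    (hij : j ≤ a + i) (hij' : i ≤ a + j) :
    IsSignWalk (-a) (b + 1) 0 1 (altBlock (-diamondDepth a b i j) (diamondDepth a b i j)) := by
  apply isSignWalk_altBlock <;> unfold diamondDepth <;> omega

theorem altBlock_diamondDepth {i j t : ℤ} (hab : a ≤ b) (hi : i ≤ a) (hj : a - i ≤ j)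
    (hj' : j ≤ a + i) :
    altBlock (-diamondDepth a b i j) (diamondDepth a b i j) t =
      altBlock (a + |t| - i) (a - |t| + i) j := by
  have hdepth : diamondDepth a b i j = min (i + j - a) (a + i - j) := by
    unfold diamondDepth
    omega
  rw [hdepth]
  unfold altBlock
  rcases abs_cases t with ⟨ht, _⟩ | ⟨ht, _⟩ <;> rw [ht] <;> split_ifs <;> omega

namespace IsCornerPair

theorem isSignWalk_upper_row (h : IsCornerPair a b x y NW NE) (hab : a ≤ b) {i t : ℤ}
    (hi : 0 ≤ i) (hi' : i ≤ a) (ht : -a ≤ t) (ht' : t ≤ b) :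
    IsSignWalk 0 (a + b + 1) 0 1 (fun j => diamondCube a b NW NE i j t) := by
  obtain ⟨u, v, hNW, hNE, huv⟩ := h.row i t hi hi' ht ht'
  have hu := hNW.right_mem (by omega)
  have hv := hNE.right_mem (by omega)
  have left : IsSignWalk 0 (a - i) 0 u (fun j => diamondCube a b NW NE i j t) :=
    hNW.congr fun j _ hj' => if_pos (by omega)
  have right : IsSignWalk (a + i + 1) (a + b + 1) (1 - v) 1
      (fun j => diamondCube a b NW NE i j t) := by
    convert (hNE.reflect (a + b + 1)).congr fun j hj _ => ?_ using 1
    · ring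
    · ring
    · ring
    · unfold diamondCube
      rw [if_neg (by omega), if_pos (by omega)]
      ring_nf
  have middle : IsSignWalk (a - i) (a + i + 1) u (1 - v)
      (fun j => diamondCube a b NW NE i j t) := by
    have hrow : ∀ j, a - i ≤ j → j < a + i + 1 →
        diamondCube a b NW NE i j t = altBlock (a + |t| - i) (a - |t| + i) j := by
      intro j hj hj'
      rw [← altBlock_diamondDepth hab hi' hj (by omega), diamondCube, if_neg (by omega),
        if_neg (by omega), if_neg (by omega), if_neg (by omega)]
    have htabs := abs_nonneg t
    split_ifs at huv with hit
    · rw [show 1 - v = u by omega]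
      refine (isSignWalk_const hu).congr fun j hj hj' => ?_
      rw [hrow j hj hj', altBlock, if_neg (by omega)]
    · rw [show u = 0 by omega, show 1 - v = 1 by omega]
      exact (isSignWalk_altBlock (by omega) (by omega) (by omega) (by omega)).congr hrow
  exact (left.trans middle (by omega) (by omega)).trans right (by omega) (by omega)

theorem isSignWalk_row (h : IsCornerPair a b x y NW NE) (hab : a ≤ b) (hba : b ≤ a + 1) {i t : ℤ}
    (hi : 0 ≤ i) (hi' : i ≤ a + b) (ht : -a ≤ t) (ht' : t ≤ b) :
    IsSignWalk 0 (a + b + 1) 0 1 (fun j => diamondCube a b NW NE i j t) := by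
  rcases le_or_gt i a with hia | hia
  · exact h.isSignWalk_upper_row hab hi hia ht ht'
  · have hrow := (h.isSignWalk_upper_row hab (i := a + b - i) (by omega) (by omega) ht ht').reflect
      (a + b + 1)
    rw [sub_self, sub_zero, sub_self, sub_zero] at hrow
    refine hrow.congr fun j hj hj' => ?_
    rw [show a + b + 1 - 1 - j = a + b - j by ring,
      diamondCube_half_turn (by omega) (by omega) hj (by omega)]

theorem isSignWalk_vertical (h : IsCornerPair a b x y NW NE) {i j : ℤ} (hi : 0 ≤ i)
    (hi' : i ≤ a + b) (hj : 0 ≤ j) (hj' : j ≤ a + b) :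
    IsSignWalk (-a) (b + 1) 0 1 (diamondCube a b NW NE i j) := by
  unfold diamondCube
  split_ifs
  · exact h.nw.isSignWalk _ _ (by omega) (by omega) (by omega)
  · exact h.ne.isSignWalk _ _ (by omega) (by omega) (by omega)
  · exact h.nw.isSignWalk _ _ (by omega) (by omega) (by omega)
  · exact h.ne.isSignWalk _ _ (by omega) (by omega) (by omega)
  · exact isSignWalk_altBlock_diamondDepth (by omega) (by omega) (by omega) (by omega)

theorem moment_eq_zero_iff (h : IsCornerPair a b x y NW NE) (hab : a ≤ b) {i j : ℤ} (hi : 0 ≤ i)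
    (hi' : i ≤ a) (hj : 0 ≤ j) (hj' : j ≤ a + b) :
    moment a b (diamondCube a b NW NE i j) = 0 ↔ a - i - x i ≤ j ∧ j ≤ a + i + y i := by
  have hx := h.nw.count_mem i hi hi'
  have hy := h.ne.count_mem i hi (by omega)
  unfold diamondCube
  split_ifs
  · rw [h.nw.moment_eq_zero_iff _ _ hi hj (by omega)]
    omega
  · rw [h.ne.moment_eq_zero_iff _ _ hi (by omega) (by omega)]
    omega
  · omega
  · omega
  · rw [moment_altBlock_neg_self (by unfold diamondDepth; omega) (by unfold diamondDepth; omega)]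
    omega

end IsCornerPair

end

theorem IsCornerFilling.of_rods {a b k : ℤ} {z : ℤ → ℤ} {C : ℤ → ℤ → ℤ → ℤ}
    (symm : ∀ α β t, C α β t = C β α t)
    (rods : ∀ α β, 0 ≤ α → 0 ≤ β → α + β < k → ∃ μ p q, (∀ t, C α β t = rod μ p q t) ∧
      (-a ≤ μ ∧ μ ≤ b) ∧ (p = q ∨ -a ≤ p ∧ p < q ∧ q < μ) ∧ (μ + p - q = 0 ↔ k - z α ≤ α + β))
    (count_mem : ∀ α, 0 ≤ α → α ≤ k → 0 ≤ z α ∧ z α ≤ k - α) : IsCornerFilling a b k z C where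
  symm := symm
  isSignWalk α β hα hβ hk := by
    obtain ⟨μ, p, q, hC, hμ, hpq, -⟩ := rods α β hα hβ hk
    rw [funext hC]
    exact isSignWalk_rod ⟨hμ.1, by omega⟩ hpq
  moment_eq_zero_iff α β hα hβ hk := by
    obtain ⟨μ, p, q, hC, hμ, hpq, hz⟩ := rods α β hα hβ hk
    rw [funext hC, moment_rod hμ hpq, hz]
  count_mem := count_mem

theorem moment_comp_neg (a : ℤ) (g : ℤ → ℤ) : moment a a (fun t => g (-t)) = -moment a a g := by
  rw [moment, moment, ← sum_neg_distrib]
  refine sum_equiv (Equiv.neg ℤ) (fun t => ?_) (fun t _ => ?_)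
  · simp only [mem_Ico, Equiv.neg_apply]
    omega
  · simp

theorem IsCornerFilling.comp_neg {a k : ℤ} {z : ℤ → ℤ} {C : ℤ → ℤ → ℤ → ℤ}
    (h : IsCornerFilling a a k z C) : IsCornerFilling a a k z (fun α β t => C α β (-t)) where
  symm α β t := h.symm α β (-t)
  isSignWalk α β hα hβ hk := by
    convert (h.isSignWalk α β hα hβ hk).reflect 1 using 1 <;> ring_nf
  moment_eq_zero_iff α β hα hβ hk := by
    rw [moment_comp_neg, neg_eq_zero, h.moment_eq_zero_iff α β hα hβ hk]
  count_mem := h.count_mem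

/-- The cube `diamondCube a b NW NE` with its coordinates shifted to `Fin (a + b + 1)`. -/
noncomputable def finDiamondCube (a b : ℕ) (NW NE : ℤ → ℤ → ℤ → ℤ) (i j k : Fin (a + b + 1)) : ℤ :=
  diamondCube a b NW NE (i : ℕ) (j : ℕ) (-a + (k : ℕ))

theorem sum_range_two_mul_add_one (n : ℕ) : ∑ i ∈ range n, (2 * (i : ℤ) + 1) = n ^ 2 := by
  induction n with
  | zero => rfl
  | succ n ih =>
    rw [sum_range_succ, ih]
    push_cast
    ring

theorem card_filter_fin_Icc {n : ℕ} {lo hi : ℤ} (hlo : 0 ≤ lo) (hle : lo ≤ hi + 1) (hhi : hi < n) :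
    ((univ.filter fun j : Fin n => lo ≤ (j : ℕ) ∧ ((j : ℕ) : ℤ) ≤ hi).card : ℤ) = hi + 1 - lo := by
  rw [← Int.card_Icc_of_le _ _ hle, Nat.cast_inj]
  refine card_bij (fun j _ => ((j : ℕ) : ℤ)) ?_ ?_ ?_
  · intro j hj
    simpa using hj
  · intro j _ j' _ hjj'
    exact Fin.ext (by exact_mod_cast hjj')
  · intro j hj
    rw [mem_Icc] at hj
    exact ⟨⟨j.toNat, by omega⟩, by simp; omega, by simp; omega⟩

section

variable {a b : ℕ} {x y : ℤ → ℤ} {NW NE : ℤ → ℤ → ℤ → ℤ}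

theorem ashl_finDiamondCube_rev (i j : Fin (a + b + 1)) :
    ashl (finDiamondCube a b NW NE) i.rev j.rev = ashl (finDiamondCube a b NW NE) i j := by
  have hrev : ∀ i : Fin (a + b + 1), ((i.rev : ℕ) : ℤ) = a + b - (i : ℕ) := by
    intro i
    rw [Fin.val_rev]
    omega
  refine sum_congr rfl fun k _ => ?_
  rw [finDiamondCube, hrev, hrev,
    diamondCube_half_turn (by omega) (by omega) (by omega) (by omega), finDiamondCube]

namespace IsCornerPair

theorem isASHM (h : IsCornerPair a b x y NW NE) (hab : a ≤ b) (hba : b ≤ a + 1) :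
    IsASHM (finDiamondCube a b NW NE) := by
  have hrow : ∀ i k, AltLine fun j => finDiamondCube a b NW NE i j k := by
    intro i k
    simpa only [zero_add, finDiamondCube] using (h.isSignWalk_row (i := (i : ℕ)) (t := -a + (k : ℕ))
      (by omega) (by omega) (by omega) (by omega) (by omega) (by omega)).altLine
        (n := a + b + 1) (by push_cast; ring)
  refine ⟨fun j k => ?_, hrow, fun i j => ?_⟩
  · convert hrow j k using 2 with i
    exact diamondCube_transpose (by omega) h.nw.symm h.ne.symm (by omega) (by omega) _
  · exact (h.isSignWalk_vertical (i := (i : ℕ)) (j := (j : ℕ)) (by omega) (by omega) (by omega)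
      (by omega)).altLine (by push_cast; ring)

theorem ashl_eq (h : IsCornerPair a b x y NW NE) (i j : Fin (a + b + 1)) :
    ashl (finDiamondCube a b NW NE) i j =
      moment a b (diamondCube a b NW NE (i : ℕ) (j : ℕ)) + (a + 1) := by
  set g := diamondCube a b NW NE (i : ℕ) (j : ℕ) with hg
  have hsum : ∑ k : Fin (a + b + 1), g (-a + (k : ℕ)) = 1 :=
    (h.isSignWalk_vertical (by omega) (by omega) (by omega) (by omega)).sum_eq
      (by push_cast; ring)
  have hmoment : moment a b g =
      ∑ k : Fin (a + b + 1), (-a + (k : ℕ) : ℤ) * g (-a + (k : ℕ)) := by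
    refine (sum_bij (fun k _ => -(a : ℤ) + ((k : Fin (a + b + 1)) : ℕ)) ?_ ?_ ?_ ?_).symm
    · intro k _
      rw [mem_Ico]
      omega
    · intro k _ k' _ hkk'
      exact Fin.ext (by omega)
    · intro t ht
      rw [mem_Ico] at ht
      exact ⟨⟨(t + a).toNat, by omega⟩, mem_univ _, by simp; omega⟩
    · intro k _
      rfl
  calc ashl (finDiamondCube a b NW NE) i j
      = ∑ k : Fin (a + b + 1), ((-a + (k : ℕ) : ℤ) * g (-a + (k : ℕ)) +
          (a + 1) * g (-a + (k : ℕ))) :=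
        sum_congr rfl fun k _ => by rw [finDiamondCube, ← hg]; ring
    _ = moment a b g + (a + 1) := by
        rw [sum_add_distrib, ← mul_sum, hsum, ← hmoment, mul_one]

theorem card_ashl_row (h : IsCornerPair a b x y NW NE) (hab : a ≤ b) (i : Fin (a + b + 1))
    (hi : (i : ℕ) ≤ a) :
    ((univ.filter fun j => ashl (finDiamondCube a b NW NE) i j = a + 1).card : ℤ) =
      2 * (i : ℕ) + 1 + x (i : ℕ) + y (i : ℕ) := by
  have hx := h.nw.count_mem (i : ℕ) (by omega) (by omega)
  have hy := h.ne.count_mem (i : ℕ) (by omega) (by omega)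
  have hzero : ∀ j : Fin (a + b + 1), ashl (finDiamondCube a b NW NE) i j = a + 1 ↔
      (a : ℤ) - (i : ℕ) - x (i : ℕ) ≤ (j : ℕ) ∧ ((j : ℕ) : ℤ) ≤ a + (i : ℕ) + y (i : ℕ) := by
    intro j
    rw [h.ashl_eq, ← h.moment_eq_zero_iff (by omega) (by omega) (by omega) (by omega) (by omega)]
    omega
  simp only [hzero]
  rw [card_filter_fin_Icc (by omega) (by omega) (by omega)]
  ring

theorem card_ashl_eq_sum_rows (h : IsCornerPair a b x y NW NE) (hab : a ≤ b) (hba : b ≤ a + 1) :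
    ((univ.filter fun p : Fin (a + b + 1) × Fin (a + b + 1) =>
      ashl (finDiamondCube a b NW NE) p.1 p.2 = a + 1).card : ℤ) =
      ∑ i ∈ range (a + 1), (2 * i + 1 + x i + y i) + ∑ i ∈ range b, (2 * i + 1 + x i + y i) := by
  set r : Fin (a + b + 1) → ℤ := fun i =>
    ((univ.filter fun j => ashl (finDiamondCube a b NW NE) i j = a + 1).card : ℤ) with hr
  have hrev : ∀ i, r i.rev = r i := by
    intro i
    rw [hr, Nat.cast_inj]
    exact card_equiv Fin.revPerm fun j => by simp [← ashl_finDiamondCube_rev i.rev]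
  let w : ℕ → ℤ := fun i => 2 * i + 1 + x i + y i
  have hrow : ∀ i : Fin (a + b + 1), r i = if (i : ℕ) < a + 1 then w i else w (a + b - i) := by
    intro i
    split_ifs with hi
    · exact h.card_ashl_row hab i (by omega)
    · have hval : ((i.rev : Fin (a + b + 1)) : ℕ) = a + b - i := by
        rw [Fin.val_rev]
        omega
      rw [← hrev, ← hval]
      exact h.card_ashl_row hab i.rev (by omega)
  have hcard : ((univ.filter fun p : Fin (a + b + 1) × Fin (a + b + 1) =>
      ashl (finDiamondCube a b NW NE) p.1 p.2 = a + 1).card : ℤ) = ∑ i, r i := by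
    simp only [hr, card_filter, Fintype.sum_prod_type, Nat.cast_sum]
  rw [hcard, sum_congr rfl fun i _ => hrow i,
    Fin.sum_univ_eq_sum_range (fun i => if i < a + 1 then w i else w (a + b - i)),
    add_right_comm, sum_range_add, ← sum_range_reflect w b]
  congr 1
  · exact sum_congr rfl fun i hi => if_pos (mem_range.mp hi)
  · refine sum_congr rfl fun i _ => ?_
    rw [if_neg (by omega)]
    congr 1
    omega

theorem card_ashl (h : IsCornerPair a b x y NW NE) (hab : a ≤ b) (hba : b ≤ a + 1) :
    ((univ.filter fun p : Fin (a + b + 1) × Fin (a + b + 1) =>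
      ashl (finDiamondCube a b NW NE) p.1 p.2 = a + 1).card : ℤ) =
      (a + 1) ^ 2 + b ^ 2 + ∑ i ∈ range (a + 1), (x i + y i) + ∑ i ∈ range b, (x i + y i) := by
  have hsum : ∀ n : ℕ, ∑ i ∈ range n, (2 * (i : ℤ) + 1 + x i + y i) =
      n ^ 2 + ∑ i ∈ range n, (x i + y i) := by
    intro n
    simp only [← sum_range_two_mul_add_one, ← sum_add_distrib, add_assoc]
  rw [h.card_ashl_eq_sum_rows hab hba, hsum, hsum]
  push_cast
  ring

end IsCornerPair

end

end DiamondCube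

section CornerFillings

/-- The number of cells that row `i` contains of an antidiagonal without its end cells, when that
antidiagonal has `r` cells left, in the rows `1, …, r`. -/
def innerRow (r i : ℤ) : ℤ := if 1 ≤ i ∧ i ≤ r then 1 else 0

/-- The filling of the corner at `(0, 2c)` for order `2c + 1`. The antidiagonal of length `l` has
its `+1`s in plane `l`, except that those of lengths `1` and `c - 1` exchange their planes. The
inner cells of the longest one get in addition `+1` in plane `1 - c` and `-1` in plane `1`, which
makes their moment `c + (1 - c) - 1 = 0`. -/
def oddCorner (c α β t : ℤ) : ℤ :=
  if t = c then layer (c - 1) α β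
  else if t = 1 - c then innerLayer (c - 1) α β
  else if t = 1 then layer (c - 2) α β - innerLayer (c - 2 + 1) α β
  else if t = c - 1 then layer 0 α β
  else if 2 ≤ t ∧ t ≤ c - 2 then layer (t - 1) α β
  else 0

theorem sum_innerRow {r n : ℕ} (h : r < n) : ∑ i ∈ range n, innerRow r i = r := by
  have hfilter : (range n).filter (fun i : ℕ => 1 ≤ (i : ℤ) ∧ (i : ℤ) ≤ r) = Icc 1 r := by
    ext i
    simp only [mem_filter, mem_range, mem_Icc]
    omega
  simp only [innerRow]
  rw [sum_boole, hfilter, Nat.card_Icc, Nat.add_sub_cancel]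

theorem isCornerFilling_oddCorner {c : ℤ} (hc : 3 ≤ c) :
    IsCornerFilling c c c (innerRow (c - 2)) (oddCorner c) := by
  refine IsCornerFilling.of_rods (fun α β t => ?_) (fun α β hα hβ hk => ?_) (fun α _ hk => ?_)
  · simp only [oddCorner, layer_comm _ α, innerLayer_comm _ α]
  · unfold innerRow
    obtain hs | hs | hs | hs | hs : (α + β = c - 1 ∧ 0 < α ∧ 0 < β) ∨
        (α + β = c - 1 ∧ ¬(0 < α ∧ 0 < β)) ∨ α + β = c - 2 ∨ α + β = 0 ∨
        (1 ≤ α + β ∧ α + β ≤ c - 3) := by omega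
    · exact ⟨c, 1 - c, 1, by grind [oddCorner, layer, innerLayer, rod],
        by omega, by omega, by grind⟩
    · exact ⟨c, c, c, by grind [oddCorner, layer, innerLayer, rod],
        by omega, by omega, by grind⟩
    · exact ⟨1, 1, 1, by grind [oddCorner, layer, innerLayer, rod],
        by omega, by omega, by grind⟩
    · exact ⟨c - 1, 1, 1, by grind [oddCorner, layer, innerLayer, rod],
        by omega, by omega, by grind⟩
    · exact ⟨α + β + 1, 1, 1, by grind [oddCorner, layer, innerLayer, rod],
        by omega, by omega, by grind⟩
  · unfold innerRow
    split_ifs <;> omega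

/-- The sum of the entries `β ≥ 0` of row `α` in plane `t` of `oddCorner c`. -/
def oddCornerRowSum (c α t : ℤ) : ℤ :=
  if t = c ∧ α < c ∨ t = 1 - c ∧ 0 < α ∧ α < c - 1 ∨ t = 1 ∧ α = 0 ∨
    t = c - 1 ∧ α = 0 ∨ (2 ≤ t ∧ t ≤ c - 2) ∧ α < t then 1 else 0

theorem isSignWalk_oddCorner {c α t : ℤ} (hc : 3 ≤ c) (hα : 0 ≤ α) :
    IsSignWalk 0 (c - α) 0 (oddCornerRowSum c α t) (fun β => oddCorner c α β t) := by
  unfold oddCorner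
  split_ifs
  · convert isSignWalk_layer (k := c) (s := c - 1) (by omega) using 1
    grind [oddCornerRowSum]
  · convert isSignWalk_innerLayer (k := c) (s := c - 1) (by omega) using 1
    grind [oddCornerRowSum]
  · convert isSignWalk_layer_sub_innerLayer (k := c) (s := c - 2) hα (by omega) (by omega) using 1
    grind [oddCornerRowSum]
  · convert isSignWalk_layer (k := c) (s := 0) (by omega) using 1
    grind [oddCornerRowSum]
  · convert isSignWalk_layer (k := c) (s := t - 1) (by omega) using 1
    grind [oddCornerRowSum]
  · convert isSignWalk_const (.inl rfl) using 1
    grind [oddCornerRowSum]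

theorem isCornerPair_oddCorner {c : ℤ} (hc : 3 ≤ c) :
    IsCornerPair c c (innerRow (c - 2)) (innerRow (c - 2)) (fun α β t => oddCorner c α β (-t))
      (oddCorner c) where
  nw := (isCornerFilling_oddCorner hc).comp_neg
  ne := isCornerFilling_oddCorner hc
  row i t hi hi' ht ht' := by
    refine ⟨_, _, isSignWalk_oddCorner hc hi, isSignWalk_oddCorner hc hi, ?_⟩
    simp only [oddCornerRowSum, lt_abs]
    split_ifs <;> omega

/-- The filling of the corner at `(0, 0)` for order `2m`. The antidiagonal of length `l` has its
`+1`s in plane `l` for `l = m - 1` and `l = m - 2`, and in plane `-l` for `2 ≤ l ≤ m - 4`; the inner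
cells of the one of length `m - 2` have moment `(m - 2) + (3 - m) - (-1) = 2`, so the repeated value
does not occur in this corner. For `m = 4` the planes `3 - m` and `-1` coincide and are empty. -/
def evenCornerNW (m α β t : ℤ) : ℤ :=
  if t = m - 1 then layer (m - 2) α β
  else if t = m - 2 then layer (m - 3) α β
  else if t = 1 - m then layer 0 α β
  else if t = 3 - m then innerLayer (m - 3) α β
  else if t = -1 then layer (m - 4) α β - innerLayer (m - 4 + 1) α β
  else if 4 - m ≤ t ∧ t ≤ -2 then layer (-t - 1) α β
  else 0

/-- The filling of the corner at `(0, 2m - 1)` for order `2m`. The inner cells of the two longest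
antidiagonals have the moments `m + (1 - m) - 1 = 0` and `1 + (2 - m) - (3 - m) = 0`. -/
def evenCornerNE (m α β t : ℤ) : ℤ :=
  if t = m then layer (m - 1) α β
  else if t = 1 then layer (m - 2) α β - innerLayer (m - 2 + 1) α β
  else if t = 1 - m then innerLayer (m - 1) α β
  else if t = 2 - m then layer 0 α β + innerLayer (m - 2) α β
  else if t = 3 - m then layer (m - 3) α β - innerLayer (m - 3 + 1) α β
  else if 2 ≤ t ∧ t ≤ m - 3 then layer (t - 1) α β
  else 0

theorem isCornerFilling_evenCornerNW {m : ℤ} (hm : 4 ≤ m) :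
    IsCornerFilling (m - 1) m (m - 1) (fun _ => 0) (evenCornerNW m) := by
  refine IsCornerFilling.of_rods (fun α β t => ?_) (fun α β hα hβ hk => ?_) (fun α _ hk => ?_)
  · simp only [evenCornerNW, layer_comm _ α, innerLayer_comm _ α]
  · obtain hs | hs | hs | hs | hs | hs : α + β = m - 2 ∨ (α + β = m - 3 ∧ 0 < α ∧ 0 < β) ∨
        (α + β = m - 3 ∧ ¬(0 < α ∧ 0 < β)) ∨ α + β = 0 ∨
        (1 ≤ α + β ∧ α + β = m - 4) ∨ (1 ≤ α + β ∧ α + β ≤ m - 5) := by omega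
    · exact ⟨m - 1, 1, 1, by grind [evenCornerNW, layer, innerLayer, rod],
        by omega, by omega, by omega⟩
    · exact ⟨m - 2, 3 - m, -1, by grind [evenCornerNW, layer, innerLayer, rod],
        by omega, by omega, by omega⟩
    · exact ⟨m - 2, 1, 1, by grind [evenCornerNW, layer, innerLayer, rod],
        by omega, by omega, by omega⟩
    · exact ⟨1 - m, 1, 1, by grind [evenCornerNW, layer, innerLayer, rod],
        by omega, by omega, by omega⟩
    · exact ⟨-1, 1, 1, by grind [evenCornerNW, layer, innerLayer, rod],
        by omega, by omega, by omega⟩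
    · exact ⟨-(α + β + 1), 1, 1, by grind [evenCornerNW, layer, innerLayer, rod],
        by omega, by omega, by omega⟩
  · omega

theorem isCornerFilling_evenCornerNE {m : ℤ} (hm : 4 ≤ m) :
    IsCornerFilling (m - 1) m m (fun i => innerRow (m - 2) i + innerRow (m - 3) i)
      (evenCornerNE m) := by
  refine IsCornerFilling.of_rods (fun α β t => ?_) (fun α β hα hβ hk => ?_) (fun α _ hk => ?_)
  · simp only [evenCornerNE, layer_comm _ α, innerLayer_comm _ α]
  · unfold innerRow
    obtain hs | hs | hs | hs | hs | hs | hs : (α + β = m - 1 ∧ 0 < α ∧ 0 < β) ∨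
        (α + β = m - 1 ∧ ¬(0 < α ∧ 0 < β)) ∨ (α + β = m - 2 ∧ 0 < α ∧ 0 < β) ∨
        (α + β = m - 2 ∧ ¬(0 < α ∧ 0 < β)) ∨ α + β = m - 3 ∨ α + β = 0 ∨
        (1 ≤ α + β ∧ α + β ≤ m - 4) := by omega
    · exact ⟨m, 1 - m, 1, by grind [evenCornerNE, layer, innerLayer, rod],
        by omega, by omega, by grind⟩
    · exact ⟨m, 1, 1, by grind [evenCornerNE, layer, innerLayer, rod],
        by omega, by omega, by grind⟩
    · exact ⟨1, 2 - m, 3 - m, by grind [evenCornerNE, layer, innerLayer, rod],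
        by omega, by omega, by grind⟩
    · exact ⟨1, 1, 1, by grind [evenCornerNE, layer, innerLayer, rod],
        by omega, by omega, by grind⟩
    · exact ⟨3 - m, 1, 1, by grind [evenCornerNE, layer, innerLayer, rod],
        by omega, by omega, by grind⟩
    · exact ⟨2 - m, 1, 1, by grind [evenCornerNE, layer, innerLayer, rod],
        by omega, by omega, by grind⟩
    · exact ⟨α + β + 1, 1, 1, by grind [evenCornerNE, layer, innerLayer, rod],
        by omega, by omega, by grind⟩
  · unfold innerRow
    split_ifs <;> omega

/-- The sum of the entries `β ≥ 0` of row `α` in plane `t` of `evenCornerNW m`. -/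
def evenCornerNWRowSum (m α t : ℤ) : ℤ :=
  if t = m - 1 ∧ α < m - 1 ∨ t = m - 2 ∧ α < m - 2 ∨ t = 1 - m ∧ α = 0 ∨
    t = 3 - m ∧ 0 < α ∧ α < m - 3 ∨ t = -1 ∧ t ≠ 3 - m ∧ α = 0 ∨
    (4 - m ≤ t ∧ t ≤ -2) ∧ α < -t then 1 else 0

theorem isSignWalk_evenCornerNW {m α t : ℤ} (hm : 4 ≤ m) (hα : 0 ≤ α) :
    IsSignWalk 0 (m - 1 - α) 0 (evenCornerNWRowSum m α t) (fun β => evenCornerNW m α β t) := by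
  unfold evenCornerNW
  split_ifs
  · convert isSignWalk_layer (k := m - 1) (s := m - 2) (by omega) using 1
    grind [evenCornerNWRowSum]
  · convert isSignWalk_layer (k := m - 1) (s := m - 3) (by omega) using 1
    grind [evenCornerNWRowSum]
  · convert isSignWalk_layer (k := m - 1) (s := 0) (by omega) using 1
    grind [evenCornerNWRowSum]
  · convert isSignWalk_innerLayer (k := m - 1) (s := m - 3) (by omega) using 1
    grind [evenCornerNWRowSum]
  · convert isSignWalk_layer_sub_innerLayer (k := m - 1) (s := m - 4) hα (by omega) (by omega)
      using 1
    grind [evenCornerNWRowSum]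
  · convert isSignWalk_layer (k := m - 1) (s := -t - 1) (by omega) using 1
    grind [evenCornerNWRowSum]
  · convert isSignWalk_const (.inl rfl) using 1
    grind [evenCornerNWRowSum]

/-- The sum of the entries `β ≥ 0` of row `α` in plane `t` of `evenCornerNE m`. -/
def evenCornerNERowSum (m α t : ℤ) : ℤ :=
  if t = m ∧ α < m ∨ t = 1 ∧ α = 0 ∨ t = 1 - m ∧ 0 < α ∧ α < m - 1 ∨
    t = 2 - m ∧ α < m - 2 ∨ t = 3 - m ∧ α = 0 ∨ (2 ≤ t ∧ t ≤ m - 3) ∧ α < t then 1 else 0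

theorem isSignWalk_evenCornerNE {m α t : ℤ} (hm : 4 ≤ m) (hα : 0 ≤ α) :
    IsSignWalk 0 (m - α) 0 (evenCornerNERowSum m α t) (fun β => evenCornerNE m α β t) := by
  unfold evenCornerNE
  split_ifs
  · convert isSignWalk_layer (k := m) (s := m - 1) (by omega) using 1
    grind [evenCornerNERowSum]
  · convert isSignWalk_layer_sub_innerLayer (k := m) (s := m - 2) hα (by omega) (by omega) using 1
    grind [evenCornerNERowSum]
  · convert isSignWalk_innerLayer (k := m) (s := m - 1) (by omega) using 1
    grind [evenCornerNERowSum]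
  · convert isSignWalk_layer_zero_add_innerLayer (k := m) (s := m - 2) hα (by omega) (by omega)
      using 1
    grind [evenCornerNERowSum]
  · convert isSignWalk_layer_sub_innerLayer (k := m) (s := m - 3) hα (by omega) (by omega) using 1
    grind [evenCornerNERowSum]
  · convert isSignWalk_layer (k := m) (s := t - 1) (by omega) using 1
    grind [evenCornerNERowSum]
  · convert isSignWalk_const (.inl rfl) using 1
    grind [evenCornerNERowSum]

theorem isCornerPair_evenCorner {m : ℤ} (hm : 4 ≤ m) :
    IsCornerPair (m - 1) m (fun _ => 0) (fun i => innerRow (m - 2) i + innerRow (m - 3) i)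
      (evenCornerNW m) (evenCornerNE m) where
  nw := isCornerFilling_evenCornerNW hm
  ne := isCornerFilling_evenCornerNE hm
  row i t hi hi' ht ht' := by
    refine ⟨_, _, isSignWalk_evenCornerNW hm hi, isSignWalk_evenCornerNE hm hi, ?_⟩
    simp only [evenCornerNWRowSum, evenCornerNERowSum, lt_abs]
    split_ifs <;> omega

end CornerFillings

section Counting

theorem exists_isASHM_card_odd {c : ℕ} (hc : 3 ≤ c) :
    ∃ A : Fin (2 * c + 1) → Fin (2 * c + 1) → Fin (2 * c + 1) → ℤ, IsASHM A ∧
      (univ.filter fun p : Fin (2 * c + 1) × Fin (2 * c + 1) => ashl A p.1 p.2 = c + 1).card =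
        2 * c ^ 2 + 6 * c - 7 := by
  rw [two_mul]
  have h := isCornerPair_oddCorner (c := c) (by omega)
  refine ⟨_, h.isASHM le_rfl (by omega), ?_⟩
  have hcard := h.card_ashl le_rfl (by omega)
  rw [show (c : ℤ) - 2 = (c - 2 : ℕ) by omega] at hcard
  simp only [sum_add_distrib, sum_innerRow (show c - 2 < c + 1 by omega),
    sum_innerRow (show c - 2 < c by omega)] at hcard
  zify [show 7 ≤ 2 * c ^ 2 + 6 * c by nlinarith, show 2 ≤ c by omega] at hcard ⊢
  linear_combination hcard

theorem exists_isASHM_card_even {m : ℕ} (hm : 4 ≤ m) :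
    ∃ A : Fin (2 * m) → Fin (2 * m) → Fin (2 * m) → ℤ, IsASHM A ∧
      (univ.filter fun p : Fin (2 * m) × Fin (2 * m) => ashl A p.1 p.2 = m).card =
        2 * m ^ 2 + 4 * m - 10 := by
  obtain ⟨a, rfl⟩ : ∃ a, m = a + 1 := ⟨m - 1, by omega⟩
  have h := isCornerPair_evenCorner (m := a + 1) (by omega)
  rw [show (a + 1 : ℤ) - 1 = a by ring, show (a + 1 : ℤ) = (a + 1 : ℕ) by simp] at h
  rw [show 2 * (a + 1) = a + (a + 1) + 1 by ring]
  refine ⟨_, h.isASHM (by omega) le_rfl, ?_⟩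
  have hcard := h.card_ashl (by omega) le_rfl
  rw [show ((a + 1 : ℕ) : ℤ) - 2 = (a - 1 : ℕ) by omega,
    show ((a + 1 : ℕ) : ℤ) - 3 = (a - 2 : ℕ) by omega] at hcard
  simp only [sum_add_distrib, sum_const_zero,
    sum_innerRow (show a - 1 < a + 1 by omega), sum_innerRow (show a - 2 < a + 1 by omega)] at hcard
  zify [show 10 ≤ 2 * (a + 1) ^ 2 + 4 * (a + 1) by nlinarith, show 1 ≤ a by omega,
    show 2 ≤ a by omega] at hcard ⊢
  linear_combination hcard

end Counting

theorem ashl_repeated_value_even_and_general :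
    (∀ n : ℕ, Even n → 8 ≤ n →
      ∃ A : Fin n → Fin n → Fin n → ℤ, IsASHM A ∧
        (Finset.univ.filter
          (fun p : Fin n × Fin n =>
            ashl A p.1 p.2 = ((n / 2 : ℕ) : ℤ))).card =
          (n ^ 2 + 4 * n - 20) / 2) ∧
    (∀ n : ℕ, 7 ≤ n →
      ∃ (A : Fin n → Fin n → Fin n → ℤ) (v : ℤ), IsASHM A ∧
        (Finset.univ.filter
          (fun p : Fin n × Fin n => ashl A p.1 p.2 = v)).card =
          (n ^ 2 + 4 * n - 19) / 2 ∧
        2 * n < (n ^ 2 + 4 * n - 19) / 2) := by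
  refine ⟨fun n hn h8 => ?_, fun n h7 => ?_⟩
  · obtain ⟨m, rfl⟩ := even_iff_two_dvd.mp hn
    obtain ⟨A, hA, hcard⟩ := exists_isASHM_card_even (m := m) (by omega)
    refine ⟨A, hA, ?_⟩
    rw [Nat.mul_div_cancel_left m two_pos, hcard, mul_pow]
    omega
  · have hlt : 2 * n < (n ^ 2 + 4 * n - 19) / 2 := by
      have := Nat.mul_le_mul_right n h7
      rw [← sq] at this
      omega
    obtain ⟨c, rfl | rfl⟩ := n.even_or_odd'
    · obtain ⟨A, hA, hcard⟩ := exists_isASHM_card_even (m := c) (by omega)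
      exact ⟨A, c, hA, by rw [hcard, mul_pow]; omega, hlt⟩
    · obtain ⟨A, hA, hcard⟩ := exists_isASHM_card_odd (c := c) (by omega)
      exact ⟨A, c + 1, hA, by rw [hcard, add_sq, mul_pow]; omega, hlt⟩
end
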